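/- Let d > 2. There exists α₀ = α₀(d,λ) ∈ (0, d) depending only on d and λ such that for all T > 0 and all a ∈ Ω, the weighted gradient bound Σ_{x∈ℤ^d} (|x|+1)^{2α₀} |∇_x G_T(a;x,0)|² ≤ C(d,λ) holds, with a constant depending only on d and λ. -/

import Mathlib

/-!
The exponent only has to be positive, so a weighted energy estimate suffices. Testing the
equation with `ω² G`, where `ω ≈ (|x|+1)^α`, gives

`λ ∑ ω² |∇G|² ≤ ω(0)² G(0) + C α ∑ (ω² |∇G|² + ω² G² / (|x|+1)²)`,

because the relative increment of `ω` is at most `C α / (|x|+1)` (`energy_test`,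
`energy_pointwise`). In dimension `d > 2` the Hardy inequality (`hardy`, obtained by testing with
the field `x / (|x|² + K)`, whose divergence is about `(d-2)/|x|²`) applied to `ω G` bounds
`∑ ω² G² / (|x|+1)²` by `C ∑ ω² |∇G|²` for small `α` (`weighted_hardy`). Hence for
`α` small depending on `d` and `λ` the error is absorbed. The value `G(0)` is also controlled by the
Hardy term at the origin, so the energy `E` satisfies `E² ≤ C E` (`weighted_energy`).

Since `G` is only known to be square summable, the weight is truncated, `ω = min (ρ^α) R` with
`ρ = |x|² + (26 d)²`; all constants are uniform in `R`, and `R → ∞` is realised by comparing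
finite partial sums.
-/

open MeasureTheory
open scoped ENNReal

namespace StochHom

noncomputable section


/-- The lattice `ℤ^d`. -/
abbrev Lat (d : ℕ) := Fin d → ℤ

/-- The `i`-th coordinate unit vector of `ℤ^d`. -/
def unitv (d : ℕ) (i : Fin d) : Lat d := fun j => if j = i then 1 else 0

/-- Euclidean norm of a vector in `ℝ^d`. -/
noncomputable def vnorm {d : ℕ} (v : Fin d → ℝ) : ℝ := Real.sqrt (∑ i, (v i) ^ 2)

/-- Euclidean norm of a lattice point. -/
noncomputable def latnorm {d : ℕ} (x : Lat d) : ℝ := vnorm (fun i => (x i : ℝ))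

/-- Discrete gradient `∇u(x) = (u(x+eᵢ) - u(x))ᵢ`. -/
def dgrad {d : ℕ} (u : Lat d → ℝ) (x : Lat d) : Fin d → ℝ :=
  fun i => u (x + unitv d i) - u x

/-- Discrete negative divergence `∇*g(x) = Σᵢ (gᵢ(x-eᵢ) - gᵢ(x))`. -/
def ddiv {d : ℕ} (g : Lat d → Fin d → ℝ) (x : Lat d) : ℝ :=
  ∑ i, (g (x - unitv d i) i - g x i)

/-- Matrix-vector multiplication for a `d×d` matrix given as `Fin d → Fin d → ℝ`. -/
def mulVec' {d : ℕ} (A : Fin d → Fin d → ℝ) (v : Fin d → ℝ) : Fin d → ℝ :=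
  fun i => ∑ j, A i j * v j

/-- The ellipticity condition defining `Ω₀`: `v·Av ≥ λ|v|²` and `|Av| ≤ |v|`. -/
def IsElliptic (d : ℕ) (lam : ℝ) (A : Fin d → Fin d → ℝ) : Prop :=
  (∀ v : Fin d → ℝ, lam * ∑ i, (v i) ^ 2 ≤ ∑ i, v i * mulVec' A v i) ∧
  (∀ v : Fin d → ℝ, vnorm (mulVec' A v) ≤ vnorm v)

/-- The space `Ω = Ω₀^{ℤ^d}` of admissible coefficient fields. -/
abbrev Coeff (d : ℕ) (lam : ℝ) :=
  {a : Lat d → Fin d → Fin d → ℝ // ∀ x, IsElliptic d lam (a x)}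

/-- Shift of a coefficient field: `(τ_z a)(x) = a(x+z)`. -/
def shift {d : ℕ} {lam : ℝ} (z : Lat d) (a : Coeff d lam) : Coeff d lam :=
  ⟨fun x => a.1 (x + z), fun x => a.2 (x + z)⟩

/-- Stationarity of an ensemble: every shift is measure preserving. -/
def Stationary {d : ℕ} {lam : ℝ} (μ : Measure (Coeff d lam)) : Prop :=
  ∀ z : Lat d, MeasurePreserving (shift z) μ μ

/-- Coefficient fields agreeing with `a` outside of `x`. -/
def sameOutside {d : ℕ} {lam : ℝ} (a : Coeff d lam) (x : Lat d) :
    Set (Coeff d lam) :=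
  {b | ∀ y, y ≠ x → b.1 y = a.1 y}

/-- The oscillation `osc_{a(x)} ζ`. -/
noncomputable def osc {d : ℕ} {lam : ℝ} (ζ : Coeff d lam → ℝ) (a : Coeff d lam)
    (x : Lat d) : ℝ :=
  sSup (ζ '' sameOutside a x) - sInf (ζ '' sameOutside a x)

/-- Membership in `C_b(Ω)`: bounded continuous functions. -/
def MemCb {d : ℕ} {lam : ℝ} (ζ : Coeff d lam → ℝ) : Prop :=
  Continuous ζ ∧ ∃ M, ∀ a, |ζ a| ≤ M

/-- The logarithmic Sobolev inequality with constant `ρ`. -/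
def SatisfiesLSI {d : ℕ} {lam : ℝ} (μ : Measure (Coeff d lam)) (ρ : ℝ) : Prop :=
  ∀ ζ : Coeff d lam → ℝ, MemCb ζ →
    ∫ a, (ζ a) ^ 2 * Real.log ((ζ a) ^ 2 / ∫ b, (ζ b) ^ 2 ∂μ) ∂μ
      ≤ (1 / (2 * ρ)) * ∫ a, ∑' x : Lat d, (osc ζ a x) ^ 2 ∂μ

/-- The spectral gap inequality with constant `ρ`. -/
def SatisfiesSG {d : ℕ} {lam : ℝ} (μ : Measure (Coeff d lam)) (ρ : ℝ) : Prop :=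
  ∀ ζ : Coeff d lam → ℝ, MemCb ζ →
    ∫ a, (ζ a - ∫ b, ζ b ∂μ) ^ 2 ∂μ
      ≤ (1 / ρ) * ∫ a, ∑' x : Lat d, (osc ζ a x) ^ 2 ∂μ

/-- `φ` is a bounded solution of the modified corrector equation
`(1/T)φ + ∇*(a∇φ) = -∇*(aξ)` on `ℤ^d`. -/
def IsModCorrector (d : ℕ) (T : ℝ) (ξ : Fin d → ℝ)
    (a : Lat d → Fin d → Fin d → ℝ) (φ : Lat d → ℝ) : Prop :=
  (∃ M, ∀ x, |φ x| ≤ M) ∧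
  ∀ x, (1 / T) * φ x + ddiv (fun y => mulVec' (a y) (dgrad φ y)) x
      = - ddiv (fun y => mulVec' (a y) ξ) x

/-- `G` is the `ℓ²` Green's function of `(1/T) + ∇*(a∇·)` with pole at `y`. -/
def IsGreen (d : ℕ) (T : ℝ) (a : Lat d → Fin d → Fin d → ℝ) (y : Lat d)
    (G : Lat d → ℝ) : Prop :=
  Summable (fun x => (G x) ^ 2) ∧
  ∀ x, (1 / T) * G x + ddiv (fun z => mulVec' (a z) (dgrad G z)) x
      = if x = y then 1 else 0

/-- Spectral norm (Euclidean operator norm) of a `d×d` matrix. -/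
noncomputable def specNorm {d : ℕ} (A : Fin d → Fin d → ℝ) : ℝ :=
  sSup {r : ℝ | ∃ v : Fin d → ℝ, vnorm v ≤ 1 ∧ r = vnorm (mulVec' A v)}

/-! ### Summability and summation by parts -/

theorem summable_mul_of_sq {ι : Type*} {f g : ι → ℝ} (hf : Summable fun x => f x ^ 2)
    (hg : Summable fun x => g x ^ 2) : Summable fun x => f x * g x := by
  refine Summable.of_norm_bounded (hf.add hg) fun x => ?_
  rw [Real.norm_eq_abs, abs_le]
  constructor <;> nlinarith [sq_nonneg (f x + g x), sq_nonneg (f x - g x)]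

theorem summable_sq_add {ι : Type*} {f g : ι → ℝ} (hf : Summable fun x => f x ^ 2)
    (hg : Summable fun x => g x ^ 2) : Summable fun x => (f x + g x) ^ 2 := by
  refine Summable.of_nonneg_of_le (fun x => sq_nonneg _) (fun x => ?_)
    ((hf.add hg).mul_left 2)
  nlinarith [sq_nonneg (f x - g x)]

theorem summable_sq_sub {ι : Type*} {f g : ι → ℝ} (hf : Summable fun x => f x ^ 2)
    (hg : Summable fun x => g x ^ 2) : Summable fun x => (f x - g x) ^ 2 := by
  refine Summable.of_nonneg_of_le (fun x => sq_nonneg _) (fun x => ?_)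
    ((hf.add hg).mul_left 2)
  nlinarith [sq_nonneg (f x + g x)]

theorem summable_bdd_mul {ι : Type*} {m f : ι → ℝ} {M : ℝ} (hm : ∀ x, |m x| ≤ M)
    (hf : Summable f) : Summable fun x => m x * f x := by
  refine Summable.of_norm_bounded (hf.abs.mul_left M) fun x => ?_
  rw [Real.norm_eq_abs, abs_mul]
  exact mul_le_mul_of_nonneg_right (hm x) (abs_nonneg _)

theorem summable_shift {d : ℕ} {f : Lat d → ℝ} (e : Lat d) (hf : Summable f) :
    Summable fun x => f (x + e) :=
  (Equiv.addRight e).summable_iff.mpr hf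

theorem summable_dgrad_sq {d : ℕ} {u : Lat d → ℝ} (hu : Summable fun x => u x ^ 2)
    (i : Fin d) : Summable fun x => dgrad u x i ^ 2 :=
  summable_sq_sub (summable_shift (unitv d i) hu) hu

/-- Summation by parts along the translation by `e`. -/
theorem tsum_by_parts {d : ℕ} (e : Lat d) {g v : Lat d → ℝ}
    (h1 : Summable fun x => g x * v x) (h2 : Summable fun x => g x * v (x + e)) :
    Summable (fun x => (g (x - e) - g x) * v x) ∧
      ∑' x, (g (x - e) - g x) * v x = ∑' x, g x * (v (x + e) - v x) := by
  have h3 : Summable fun x => g (x - e) * v x := by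
    have := summable_shift (-e) h2
    simpa [sub_eq_add_neg] using this
  have h4 : ∑' x, g (x - e) * v x = ∑' x, g x * v (x + e) := by
    rw [← (Equiv.addRight e).tsum_eq (fun x => g (x - e) * v x)]
    simp
  constructor
  · simpa [sub_mul] using h3.sub h1
  · simp only [sub_mul, mul_sub]
    rw [h3.tsum_sub h1, h2.tsum_sub h1, h4]

/-! ### The regularised squared distance -/

/-- The regularised squared distance `|x|² + (26 d)²`. The additive constant is so large that
lattice-scale errors in the discrete calculus below are small compared with the main terms. -/
def rho {d : ℕ} (x : Lat d) : ℝ := ∑ i, (x i : ℝ) ^ 2 + (26 * d) ^ 2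

theorem sq_le_rho {d : ℕ} (x : Lat d) (i : Fin d) : (x i : ℝ) ^ 2 ≤ rho x := by
  have := Finset.single_le_sum (f := fun i => (x i : ℝ) ^ 2) (fun i _ => sq_nonneg _)
    (Finset.mem_univ i)
  simp only [rho]
  nlinarith [sq_nonneg (26 * (d : ℝ))]

theorem sum_sq_update {d : ℕ} (x : Lat d) (i : Fin d) (s : ℤ) :
    ∑ j, (((x j + s * unitv d i j : ℤ)) : ℝ) ^ 2
      = ∑ j, (x j : ℝ) ^ 2 + 2 * s * x i + s ^ 2 := by
  have : ∀ j, (((x j + s * unitv d i j : ℤ)) : ℝ) ^ 2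
      = (x j : ℝ) ^ 2 + (if j = i then 2 * s * (x i : ℝ) + s ^ 2 else 0) := by
    intro j
    by_cases h : j = i
    · subst h; simp [unitv]; ring
    · simp [unitv, h]
  simp only [this, Finset.sum_add_distrib, Finset.sum_ite_eq', Finset.mem_univ, if_true]
  ring

theorem rho_add {d : ℕ} (x : Lat d) (i : Fin d) :
    rho (x + unitv d i) = rho x + 2 * x i + 1 := by
  have := sum_sq_update x i 1
  simp only [one_mul] at this
  simp only [rho, Pi.add_apply, this]
  push_cast; ring

theorem rho_sub {d : ℕ} (x : Lat d) (i : Fin d) :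
    rho (x - unitv d i) = rho x - 2 * x i + 1 := by
  have := sum_sq_update x i (-1)
  simp only [neg_mul, one_mul, ← sub_eq_add_neg] at this
  simp only [rho, Pi.sub_apply, this]
  push_cast; ring

theorem rho_bound {d : ℕ} (x : Lat d) : (26 * (d : ℝ)) ^ 2 ≤ rho x := by
  have : 0 ≤ ∑ i, (x i : ℝ) ^ 2 := Finset.sum_nonneg fun i _ => sq_nonneg _
  simp only [rho]; linarith

/-- The square root `r` of `rho x` and its basic properties. -/
theorem exists_sqrt_rho {d : ℕ} (hd : 2 < d) (x : Lat d) :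
    ∃ r : ℝ, 36 ≤ r ∧ 26 * (d : ℝ) ≤ r ∧ rho x = r ^ 2 ∧ ∀ i, |(x i : ℝ)| ≤ r := by
  have hd' : (3 : ℝ) ≤ d := by exact_mod_cast hd
  have hb := rho_bound x
  have h0 : 0 ≤ rho x := le_trans (sq_nonneg _) hb
  have h26 : 26 * (d : ℝ) ≤ √(rho x) := Real.le_sqrt_of_sq_le hb
  exact ⟨√(rho x), by linarith, h26, (Real.sq_sqrt h0).symm,
    fun i => Real.abs_le_sqrt (sq_le_rho x i)⟩

/-! ### A discrete Hardy inequality -/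

/-- One-coordinate expansion of the divergence of the field `x / rho x`. -/
theorem field_term {r x : ℝ} (hr : 36 ≤ r) (hx : |x| ≤ r) :
    1 - 2 * x ^ 2 / r ^ 2 - 13 / r ≤ r ^ 2 * (x / r ^ 2 - (x - 1) / (r ^ 2 - 2 * x + 1)) := by
  obtain ⟨h1, h2⟩ := abs_le.mp hx
  have hr0 : 0 < r := by linarith
  have hp : r ^ 2 / 2 ≤ r ^ 2 - 2 * x + 1 := by nlinarith
  have hp0 : 0 < r ^ 2 - 2 * x + 1 := by nlinarith
  have hxx : x ^ 2 ≤ r ^ 2 := sq_le_sq' h1 h2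
  have e1 : r ^ 2 * (x / r ^ 2 - (x - 1) / (r ^ 2 - 2 * x + 1))
      = (r ^ 2 - 2 * x ^ 2 + x) / r ^ 2
        + (r ^ 2 - 2 * x ^ 2 + x) * (2 * x - 1) / (r ^ 2 * (r ^ 2 - 2 * x + 1)) := by
    have hp1 := hp0.ne'
    generalize hq : r ^ 2 - 2 * x + 1 = q at hp1
    field_simp
    have hx2 : x = (r ^ 2 + 1 - q) / 2 := by linarith
    rw [hx2]
    ring
  have e2 : (r ^ 2 - 2 * x ^ 2 + x) / r ^ 2 = 1 - 2 * x ^ 2 / r ^ 2 + x / r ^ 2 := by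
    field_simp
  have e3 : -(1 / r) ≤ x / r ^ 2 := by
    rw [← neg_div, div_le_div_iff₀ hr0 (by positivity)]
    nlinarith
  have e4 : -(12 / r) ≤
      (r ^ 2 - 2 * x ^ 2 + x) * (2 * x - 1) / (r ^ 2 * (r ^ 2 - 2 * x + 1)) := by
    have hN : |r ^ 2 - 2 * x ^ 2 + x| ≤ 2 * r ^ 2 := by
      rw [abs_le]; constructor <;> nlinarith
    have hM : |2 * x - 1| ≤ 3 * r := by
      rw [abs_le]; constructor <;> linarith
    have hprod : |(r ^ 2 - 2 * x ^ 2 + x) * (2 * x - 1)| ≤ 2 * r ^ 2 * (3 * r) := by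
      rw [abs_mul]
      exact mul_le_mul hN hM (abs_nonneg _) (by positivity)
    have := (abs_le.mp hprod).1
    rw [← neg_div, div_le_div_iff₀ hr0 (by positivity)]
    have h5 : r ^ 2 * (r ^ 2 / 2) ≤ r ^ 2 * (r ^ 2 - 2 * x + 1) :=
      mul_le_mul_of_nonneg_left hp (by positivity)
    nlinarith
  have e5 : 13 / r = 12 / r + 1 / r := by ring
  rw [e1, e2, e5]
  linarith

/-- The field `x / rho x` has divergence at least `1 / (2 rho x)`; the leading coefficient is
`d - 2`, which is where the dimension enters. -/
theorem field_div {d : ℕ} (hd : 2 < d) (x : Lat d) :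
    1 / 2 * (1 / rho x) ≤
      ∑ i, ((x i : ℝ) / rho x
        - ((x - unitv d i) i : ℤ) / rho (x - unitv d i)) := by
  obtain ⟨r, hr, hrd, hρ, hx⟩ := exists_sqrt_rho hd x
  have hr0 : 0 < r := by linarith
  have hd' : (3 : ℝ) ≤ d := by exact_mod_cast hd
  have key : ∀ i, (1 - 2 * (x i : ℝ) ^ 2 / r ^ 2 - 13 / r) ≤ r ^ 2 * ((x i : ℝ) / rho x
        - ((x - unitv d i) i : ℤ) / rho (x - unitv d i)) := by
    intro i
    rw [rho_sub, hρ]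
    have := field_term hr (hx i)
    simpa [unitv] using this
  have hs := Finset.sum_le_sum fun i (_ : i ∈ Finset.univ) => key i
  rw [← Finset.mul_sum] at hs
  have hsum : ∑ i : Fin d, (1 - 2 * (x i : ℝ) ^ 2 / r ^ 2 - 13 / r)
      = d - 2 * (∑ i, (x i : ℝ) ^ 2) / r ^ 2 - 13 * d / r := by
    simp only [Finset.sum_sub_distrib, ← Finset.sum_div, ← Finset.mul_sum]
    simp
    ring
  have hle : (∑ i, (x i : ℝ) ^ 2) / r ^ 2 ≤ 1 := by
    rw [div_le_one (by positivity), ← hρ, rho]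
    nlinarith [sq_nonneg (26 * (d : ℝ))]
  have h13 : 13 * (d : ℝ) / r ≤ 1 / 2 := by
    rw [div_le_div_iff₀ hr0 (by norm_num)]; linarith
  rw [hsum, mul_div_assoc] at hs
  have : 1 / 2 ≤ r ^ 2 * ∑ i, ((x i : ℝ) / rho x
        - ((x - unitv d i) i : ℤ) / rho (x - unitv d i)) := by linarith
  rw [hρ, one_div (r ^ 2), ← div_eq_mul_inv, div_le_iff₀ (by positivity), ← hρ]
  rw [hρ]
  rw [hρ] at this
  linarith

/-- Young's inequality for the boundary term `h (u² - (u + g)²)` with `|h| ≤ 1/r`. -/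
theorem hardy_young {D r h u g : ℝ} (hD : 0 < D) (hr : 1 ≤ r) (hh : |h| ≤ 1 / r) :
    h * (u ^ 2 - (u + g) ^ 2) ≤ 1 / (4 * D) * (u ^ 2 / r ^ 2) + (4 * D + 1) * g ^ 2 := by
  have hr0 : 0 < r := by linarith
  have h1 : 1 / r ≤ 1 := by rw [div_le_one hr0]; exact hr
  obtain ⟨ha, hb⟩ := abs_le.mp hh
  have e1 : -(h * g ^ 2) ≤ g ^ 2 := by nlinarith [sq_nonneg g]
  have hh2 : h ^ 2 ≤ 1 / r ^ 2 := by
    have := sq_le_sq' ha hb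
    rwa [div_pow, one_pow] at this
  have e2 : -(2 * h * u * g) ≤ 1 / (4 * D) * (h ^ 2 * u ^ 2) + 4 * D * g ^ 2 := by
    have : 0 ≤ 1 / (4 * D) * (h * u + 4 * D * g) ^ 2 := by positivity
    have e : 1 / (4 * D) * (h * u + 4 * D * g) ^ 2
      = 1 / (4 * D) * (h ^ 2 * u ^ 2) + 2 * h * u * g + 4 * D * g ^ 2 := by
      field_simp; ring
    linarith
  have e3 : 1 / (4 * D) * (h ^ 2 * u ^ 2) ≤ 1 / (4 * D) * (u ^ 2 / r ^ 2) := by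
    have : h ^ 2 * u ^ 2 ≤ u ^ 2 / r ^ 2 := by
      have := mul_le_mul_of_nonneg_right hh2 (sq_nonneg u)
      rwa [div_mul_eq_mul_div, one_mul] at this
    exact mul_le_mul_of_nonneg_left this (by positivity)
  nlinarith

theorem summable_div_rho {d : ℕ} (hd : 2 < d) {f : Lat d → ℝ} (hf : Summable f) :
    Summable fun x => f x / rho x := by
  have := summable_bdd_mul (m := fun x => 1 / rho x) (M := 1) (fun x => ?_) hf
  · simpa [div_eq_inv_mul] using this
  · obtain ⟨r, hr, -, hρ, -⟩ := exists_sqrt_rho hd x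
    rw [hρ, abs_of_nonneg (by positivity), div_le_one (by positivity)]
    nlinarith

/-- Discrete Hardy inequality on `ℤ^d`, `d > 2`. -/
theorem hardy {d : ℕ} (hd : 2 < d) {u : Lat d → ℝ} (hu : Summable fun x => u x ^ 2) :
    ∑' x, u x ^ 2 / rho x ≤ (16 * d + 4) * ∑' x, ∑ i, dgrad u x i ^ 2 := by
  have hd' : (3 : ℝ) ≤ d := by exact_mod_cast hd
  have hD0 : (0 : ℝ) < d := by linarith
  set h : Fin d → Lat d → ℝ := fun i x => (x i : ℝ) / rho x with hdef
  have hb : ∀ i x, ∃ r : ℝ, 36 ≤ r ∧ rho x = r ^ 2 ∧ |h i x| ≤ 1 / r := by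
    intro i x
    obtain ⟨r, hr, -, hρ, hx⟩ := exists_sqrt_rho hd x
    have hr0 : 0 < r := by linarith
    refine ⟨r, hr, hρ, ?_⟩
    simp only [hdef, hρ, abs_div, abs_of_pos (pow_pos hr0 2)]
    rw [div_le_div_iff₀ (by positivity) hr0]
    nlinarith [hx i]
  have hb1 : ∀ i x, |h i x| ≤ 1 := by
    intro i x
    obtain ⟨r, hr, -, hh⟩ := hb i x
    refine hh.trans ?_
    rw [div_le_one (by linarith)]; linarith
  have hgs : ∀ i, Summable fun x => dgrad u x i ^ 2 := summable_dgrad_sq hu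
  have hH := summable_div_rho hd hu
  have parts : ∀ i, Summable (fun x => (h i x - h i (x - unitv d i)) * u x ^ 2) ∧
      ∑' x, (h i x - h i (x - unitv d i)) * u x ^ 2 ≤
        1 / (4 * d) * ∑' x, u x ^ 2 / rho x + (4 * d + 1) * ∑' x, dgrad u x i ^ 2 := by
    intro i
    have hs1 := summable_bdd_mul (hb1 i) hu
    have hs2 := summable_bdd_mul (hb1 i) (summable_shift (unitv d i) hu)
    obtain ⟨p1, p2⟩ := tsum_by_parts (unitv d i) hs1 hs2
    have p3 : ∀ x, (h i x - h i (x - unitv d i)) * u x ^ 2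
        = -((h i (x - unitv d i) - h i x) * u x ^ 2) := fun x => by ring
    simp only [p3]
    refine ⟨p1.neg, ?_⟩
    rw [tsum_neg, p2, ← tsum_neg, ← tsum_mul_left, ← tsum_mul_left,
      ← (hH.mul_left _).tsum_add ((hgs i).mul_left _)]
    refine Summable.tsum_le_tsum (fun x => ?_) ?_ ((hH.mul_left _).add ((hgs i).mul_left _))
    · obtain ⟨r, hr, hρ, hh⟩ := hb i x
      have := hardy_young (u := u x) (g := dgrad u x i) hD0 (by linarith : (1 : ℝ) ≤ r) hh
      rw [← hρ] at this
      have e : u x + dgrad u x i = u (x + unitv d i) := by simp [dgrad]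
      rw [e] at this
      linarith
    · have := (hs2.sub hs1).neg
      simpa [mul_sub] using this
  have h1 : 1 / 2 * ∑' x, u x ^ 2 / rho x
      ≤ ∑' x, ∑ i, (h i x - h i (x - unitv d i)) * u x ^ 2 := by
    rw [← tsum_mul_left]
    refine Summable.tsum_le_tsum (fun x => ?_) (hH.mul_left _)
      (summable_sum fun i _ => (parts i).1)
    rw [← Finset.sum_mul]
    have := mul_le_mul_of_nonneg_right (field_div hd x) (sq_nonneg (u x))
    calc 1 / 2 * (u x ^ 2 / rho x) = 1 / 2 * (1 / rho x) * u x ^ 2 := by ring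
      _ ≤ _ := this
  rw [Summable.tsum_finsetSum fun i _ => (parts i).1] at h1
  have h2 := Finset.sum_le_sum fun i (_ : i ∈ Finset.univ) => (parts i).2
  have h3 : ∑ _i : Fin d, 1 / (4 * (d : ℝ)) * ∑' x, u x ^ 2 / rho x
      = 1 / 4 * ∑' x, u x ^ 2 / rho x := by
    rw [Finset.sum_const, Finset.card_univ, Fintype.card_fin, nsmul_eq_mul]
    field_simp
  rw [Finset.sum_add_distrib, h3, ← Finset.mul_sum,
    ← Summable.tsum_finsetSum fun i _ => hgs i] at h2
  linarith

/-! ### The truncated weight -/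

/-- The weight `min (rho^α) R`; the truncation at `R` keeps all sums finite. -/
def wt {d : ℕ} (α R : ℝ) (x : Lat d) : ℝ := min (rho x ^ α) R

theorem wt_pos {d : ℕ} (hd : 2 < d) {α R : ℝ} (hR : 0 < R) (x : Lat d) : 0 < wt α R x := by
  obtain ⟨r, hr, -, hρ, -⟩ := exists_sqrt_rho hd x
  have : 0 < rho x := by rw [hρ]; positivity
  exact lt_min (Real.rpow_pos_of_pos this _) hR

theorem wt_le_of {d : ℕ} {α R t : ℝ} (hR : 0 < R) (hα : 0 ≤ α) (hα1 : α ≤ 1) (ht : 0 ≤ t)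
    {x y : Lat d} (hx : 0 < rho x) (hy : 0 < rho y) (h : rho y ≤ (1 + t) * rho x) :
    wt α R y ≤ (1 + α * t) * wt α R x := by
  have h1 : rho y ^ α ≤ (1 + α * t) * rho x ^ α := by
    calc rho y ^ α ≤ ((1 + t) * rho x) ^ α := Real.rpow_le_rpow hy.le h hα
      _ = (1 + t) ^ α * rho x ^ α := Real.mul_rpow (by linarith) hx.le
      _ ≤ _ := mul_le_mul_of_nonneg_right
        (rpow_one_add_le_one_add_mul_self (by linarith) hα hα1) (Real.rpow_nonneg hx.le _)
  have h0 : 0 ≤ α * t := mul_nonneg hα ht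
  simp only [wt]
  rw [mul_min_of_nonneg _ _ (by linarith)]
  exact min_le_min h1 (by nlinarith)

/-- The weight varies slowly: its relative increment is at most `6 α / r`, `r = √rho`. -/
theorem wt_diff {d : ℕ} (hd : 2 < d) {α R r : ℝ} (hR : 0 < R) (hα : 0 ≤ α) (hα1 : α ≤ 1)
    (x : Lat d) (i : Fin d) (hr : 36 ≤ r) (hρ : rho x = r ^ 2) (hx : |(x i : ℝ)| ≤ r) :
    |wt α R (x + unitv d i) - wt α R x| ≤ α * (6 / r) * wt α R x := by
  have hr0 : 0 < r := by linarith
  obtain ⟨hx1, hx2⟩ := abs_le.mp hx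
  have hy := rho_add x i
  rw [hρ] at hy
  have hρ0 : 0 < rho x := by rw [hρ]; positivity
  have hy0 : 0 < rho (x + unitv d i) := by rw [hy]; nlinarith
  have ht : 0 ≤ 6 / r := by positivity
  have e1 : rho (x + unitv d i) ≤ (1 + 6 / r) * rho x := by
    have : (1 + 6 / r) * r ^ 2 = r ^ 2 + 6 * r := by field_simp
    rw [hy, hρ, this]; linarith
  have e2 : rho x ≤ (1 + 6 / r) * rho (x + unitv d i) := by
    have : r ^ 2 / 2 ≤ rho (x + unitv d i) := by rw [hy]; nlinarith
    have h3 : 6 / r * (r ^ 2 / 2) ≤ 6 / r * rho (x + unitv d i) :=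
      mul_le_mul_of_nonneg_left this ht
    have h4 : 6 / r * (r ^ 2 / 2) = 3 * r := by field_simp; norm_num
    rw [add_mul, one_mul, hρ]
    nlinarith
  have f1 := wt_le_of hR hα hα1 ht hρ0 hy0 e1
  have f2 := wt_le_of hR hα hα1 ht hy0 hρ0 e2
  have w1 := wt_pos hd (α := α) hR x
  have hat : 0 ≤ α * (6 / r) := mul_nonneg hα ht
  rw [abs_le]
  constructor
  -- either the weight increases, or `f2` bounds the decrease by the smaller value
  · rcases le_total (wt α R x) (wt α R (x + unitv d i)) with h | h
    · nlinarith
    · nlinarith [mul_le_mul_of_nonneg_left h hat]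
  · linarith

theorem wt_abs_le {d : ℕ} (hd : 2 < d) {α R : ℝ} (hR : 0 < R) (x : Lat d) :
    |wt α R x| ≤ R := by
  rw [abs_of_pos (wt_pos hd hR x)]
  exact min_le_right _ _

theorem summable_wt_sq {d : ℕ} (hd : 2 < d) {α R : ℝ} (hR : 0 < R) {f : Lat d → ℝ}
    (hf : Summable f) : Summable fun x => wt α R x ^ 2 * f x := by
  refine summable_bdd_mul (M := R ^ 2) (fun x => ?_) hf
  rw [abs_pow]
  exact pow_le_pow_left₀ (abs_nonneg _) (wt_abs_le hd hR x) 2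

/-! ### Weighted energy estimate -/

/-- Weighted Hardy inequality, deduced from `hardy` applied to the product of weight and
function; the gradient of the weight is absorbed for small exponents. -/
theorem weighted_hardy {d : ℕ} (hd : 2 < d) {α R : ℝ} (hR : 0 < R) (hα : 0 ≤ α) (hα1 : α ≤ 1)
    (hsmall : 72 * d * α ^ 2 * (16 * d + 4) ≤ 1 / 2)
    {G : Lat d → ℝ} (hG : Summable fun x => G x ^ 2) :
    ∑' x, wt α R x ^ 2 * (G x ^ 2 / rho x) ≤
      16 * (16 * d + 4) * ∑' x, wt α R x ^ 2 * ∑ i, dgrad G x i ^ 2 := by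
  have hd' : (3 : ℝ) ≤ d := by exact_mod_cast hd
  have hu : Summable fun x => (wt α R x * G x) ^ 2 := by
    simpa [mul_pow] using summable_wt_sq hd (α := α) hR hG
  have hh := hardy hd hu
  have hDs : Summable fun x => ∑ i, dgrad G x i ^ 2 :=
    summable_sum fun i _ => summable_dgrad_sq hG i
  have sE := summable_wt_sq hd (α := α) hR hDs
  have sH := summable_wt_sq hd (α := α) hR (summable_div_rho hd hG)
  have step : ∑' x, ∑ i, dgrad (fun x => wt α R x * G x) x i ^ 2 ≤
      8 * ∑' x, wt α R x ^ 2 * ∑ i, dgrad G x i ^ 2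
        + 72 * d * α ^ 2 * ∑' x, wt α R x ^ 2 * (G x ^ 2 / rho x) := by
    rw [← tsum_mul_left, ← tsum_mul_left, ← (sE.mul_left _).tsum_add (sH.mul_left _)]
    refine Summable.tsum_le_tsum (fun x => ?_) (summable_sum fun i _ => summable_dgrad_sq hu i)
      ((sE.mul_left _).add (sH.mul_left _))
    obtain ⟨r, hr, -, hρ, hx⟩ := exists_sqrt_rho hd x
    have hr0 : 0 < r := by linarith
    have w0 := wt_pos hd (α := α) hR x
    have term : ∀ i, dgrad (fun x => wt α R x * G x) x i ^ 2 ≤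
        8 * (wt α R x ^ 2 * dgrad G x i ^ 2)
          + 72 * α ^ 2 * (wt α R x ^ 2 * (G x ^ 2 / rho x)) := by
      intro i
      have hw := wt_diff hd hR hα hα1 x i hr hρ (hx i)
      set w := wt α R x
      set w' := wt α R (x + unitv d i)
      have e : dgrad (fun x => wt α R x * G x) x i
          = w' * dgrad G x i + (w' - w) * G x := by
        simp only [dgrad]; ring
      have hη : α * (6 / r) ≤ 1 := by
        have : 6 / r ≤ 1 := by rw [div_le_one hr0]; linarith
        have h6 : 0 ≤ 6 / r := by positivity
        nlinarith
      have hw' : w' ^ 2 ≤ 4 * w ^ 2 := by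
        obtain ⟨ha, hb⟩ := abs_le.mp hw
        have hb' : w' ≤ 2 * w := by nlinarith
        have ha' : 0 ≤ w' := by nlinarith
        nlinarith
      have hdw : (w' - w) ^ 2 ≤ (α * (6 / r) * w) ^ 2 := by
        rw [← sq_abs (w' - w)]
        exact pow_le_pow_left₀ (abs_nonneg _) hw 2
      have hexp : 72 * α ^ 2 * (w ^ 2 * (G x ^ 2 / rho x))
          = 2 * ((α * (6 / r) * w) ^ 2 * G x ^ 2) := by
        rw [hρ]; field_simp; ring
      rw [e, hexp]
      have := mul_le_mul_of_nonneg_right hw' (sq_nonneg (dgrad G x i))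
      have := mul_le_mul_of_nonneg_right hdw (sq_nonneg (G x))
      nlinarith [sq_nonneg (w' * dgrad G x i - (w' - w) * G x)]
    refine (Finset.sum_le_sum fun i _ => term i).trans (le_of_eq ?_)
    rw [Finset.sum_add_distrib, Finset.sum_const, Finset.card_univ, Fintype.card_fin,
      nsmul_eq_mul, ← Finset.mul_sum, ← Finset.mul_sum]
    ring
  have e : ∀ x, (wt α R x * G x) ^ 2 / rho x = wt α R x ^ 2 * (G x ^ 2 / rho x) := by
    intro x; ring
  simp only [e] at hh
  have hH0 : 0 ≤ ∑' x, wt α R x ^ 2 * (G x ^ 2 / rho x) := by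
    refine tsum_nonneg fun x => ?_
    have := (sq_nonneg _).trans (rho_bound x)
    positivity
  have h2 := mul_le_mul_of_nonneg_left step (by positivity : (0 : ℝ) ≤ 16 * d + 4)
  have h3 := mul_le_mul_of_nonneg_right hsmall hH0
  linarith

theorem sq_vnorm {d : ℕ} (v : Fin d → ℝ) : vnorm v ^ 2 = ∑ i, v i ^ 2 :=
  Real.sq_sqrt (Finset.sum_nonneg fun _ _ => sq_nonneg _)

theorem sum_sq_mulVec_le {d : ℕ} {lam : ℝ} {A : Fin d → Fin d → ℝ} (hA : IsElliptic d lam A)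
    (v : Fin d → ℝ) : ∑ i, mulVec' A v i ^ 2 ≤ ∑ i, v i ^ 2 := by
  rw [← sq_vnorm, ← sq_vnorm]
  exact pow_le_pow_left₀ (Real.sqrt_nonneg _) (hA.2 v) 2

/-- Bound for the commutator term produced by the weight. -/
theorem commutator_bound {α r w w' A g G D : ℝ} (hα : 0 ≤ α) (hα1 : α ≤ 1) (hr : 36 ≤ r)
    (hw : 0 < w) (hww : |w' - w| ≤ α * (6 / r) * w) (hA : A ^ 2 ≤ D) (hg : g ^ 2 ≤ D) :
    |A * ((w' ^ 2 - w ^ 2) * (G + g))| ≤ 36 * α * (w ^ 2 * (D + G ^ 2 / r ^ 2)) := by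
  have hr0 : 0 < r := by linarith
  have h6 : 0 ≤ 6 / r := by positivity
  have h61 : 6 / r ≤ 1 := by rw [div_le_one hr0]; linarith
  have hη : α * (6 / r) ≤ 1 := by nlinarith
  have hη0 : 0 ≤ α * (6 / r) := mul_nonneg hα h6
  have hsum : |w' + w| ≤ 3 * w := by
    obtain ⟨ha, hb⟩ := abs_le.mp hww
    rw [abs_le]; constructor <;> nlinarith
  have h1 : |w' ^ 2 - w ^ 2| ≤ α * (6 / r) * w * (3 * w) := by
    rw [sq_sub_sq, mul_comm, abs_mul]
    exact mul_le_mul hww hsum (abs_nonneg _) (by positivity)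
  have h2 : |A * (G + g)| * (1 / r) ≤ 2 * (D + G ^ 2 / r ^ 2) := by
    have hD : 0 ≤ D := (sq_nonneg _).trans hA
    have hAg : |A * g| ≤ D := by
      rw [abs_le]; constructor <;> nlinarith [sq_nonneg (A + g), sq_nonneg (A - g)]
    have hAG : |A * (G / r)| ≤ D + G ^ 2 / r ^ 2 := by
      rw [← div_pow, abs_le]
      constructor <;> nlinarith [sq_nonneg (A + G / r), sq_nonneg (A - G / r),
        sq_nonneg (G / r)]
    have hr1 : 1 / r ≤ 1 := by rw [div_le_one hr0]; linarith
    have hp : 0 ≤ G ^ 2 / r ^ 2 := by positivity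
    calc |A * (G + g)| * (1 / r) = |A * (G + g) * (1 / r)| := by
          rw [abs_mul _ (1 / r), abs_of_pos (by positivity : 0 < 1 / r)]
      _ = |A * (G / r) + A * g * (1 / r)| := by congr 1; ring
      _ ≤ |A * (G / r)| + |A * g| * (1 / r) := by
          refine (abs_add_le _ _).trans ?_
          rw [abs_mul (A * g), abs_of_pos (by positivity : 0 < 1 / r)]
      _ ≤ (D + G ^ 2 / r ^ 2) + D * 1 :=
          add_le_add hAG (mul_le_mul hAg hr1 (by positivity) hD)
      _ ≤ _ := by linarith
  calc |A * ((w' ^ 2 - w ^ 2) * (G + g))| = |w' ^ 2 - w ^ 2| * |A * (G + g)| := by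
        rw [← abs_mul]; congr 1; ring
    _ ≤ α * (6 / r) * w * (3 * w) * |A * (G + g)| :=
        mul_le_mul_of_nonneg_right h1 (abs_nonneg _)
    _ = 18 * α * w ^ 2 * (|A * (G + g)| * (1 / r)) := by ring
    _ ≤ 18 * α * w ^ 2 * (2 * (D + G ^ 2 / r ^ 2)) :=
        mul_le_mul_of_nonneg_left h2 (by positivity)
    _ = _ := by ring

/-- Testing the equation with `wt² G`. -/
theorem energy_test {d : ℕ} (hd : 2 < d) {α R lam T : ℝ} (hR : 0 < R) (hT : 0 < T)
    {a : Lat d → Fin d → Fin d → ℝ} (ha : ∀ x, IsElliptic d lam (a x))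
    {G : Lat d → ℝ} (hG : IsGreen d T a 0 G) :
    Summable (fun x => ∑ i, mulVec' (a x) (dgrad G x) i
        * dgrad (fun y => wt α R y ^ 2 * G y) x i) ∧
    ∑' x, ∑ i, mulVec' (a x) (dgrad G x) i * dgrad (fun y => wt α R y ^ 2 * G y) x i
      ≤ wt α R (0 : Lat d) ^ 2 * G 0 := by
  obtain ⟨hG2, heq⟩ := hG
  set v : Lat d → ℝ := fun y => wt α R y ^ 2 * G y with hv
  set A : Fin d → Lat d → ℝ := fun i x => mulVec' (a x) (dgrad G x) i with hA
  have hv2 : Summable fun x => v x ^ 2 := by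
    have h1 : ∀ x, v x ^ 2 = wt α R x ^ 2 * (wt α R x ^ 2 * G x ^ 2) := fun x => by
      simp only [hv]; ring
    simp only [h1]
    exact summable_wt_sq hd hR (summable_wt_sq hd hR hG2)
  have hDs : Summable fun x => ∑ i, dgrad G x i ^ 2 :=
    summable_sum fun i _ => summable_dgrad_sq hG2 i
  have hA2 : ∀ i, Summable fun x => A i x ^ 2 := fun i => by
    refine Summable.of_nonneg_of_le (fun x => sq_nonneg _) (fun x => ?_) hDs
    exact (Finset.single_le_sum (f := fun i => A i x ^ 2) (fun i _ => sq_nonneg _)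
      (Finset.mem_univ i)).trans (sum_sq_mulVec_le (ha x) _)
  have parts := fun i => tsum_by_parts (unitv d i) (summable_mul_of_sq (hA2 i) hv2)
    (summable_mul_of_sq (hA2 i) (summable_shift (unitv d i) hv2))
  have hAv : ∀ i, Summable fun x => A i x * dgrad v x i := fun i =>
    summable_mul_of_sq (hA2 i) (summable_dgrad_sq hv2 i)
  refine ⟨summable_sum fun i _ => hAv i, ?_⟩
  have e1 : ∑' x, ∑ i, A i x * dgrad v x i
      = ∑' x, ∑ i, (A i (x - unitv d i) - A i x) * v x := by
    rw [Summable.tsum_finsetSum fun i _ => hAv i,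
      Summable.tsum_finsetSum fun i _ => (parts i).1]
    exact Finset.sum_congr rfl fun i _ => (parts i).2.symm
  change ∑' x, ∑ i, A i x * dgrad v x i ≤ v 0
  rw [e1, ← tsum_ite_eq (0 : Lat d) (fun _ => v 0)]
  refine Summable.tsum_le_tsum (fun x => ?_) (summable_sum fun i _ => (parts i).1)
    (hasSum_ite_eq _ _).summable
  have hx := heq x
  have hdv : ddiv (fun z => mulVec' (a z) (dgrad G z)) x
      = ∑ i, (A i (x - unitv d i) - A i x) := rfl
  rw [hdv] at hx
  rw [← Finset.sum_mul]
  have hpos : 0 ≤ 1 / T * G x * v x := by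
    have : 1 / T * G x * v x = 1 / T * (wt α R x * G x) ^ 2 := by simp only [hv]; ring
    rw [this]; positivity
  have h2 : (∑ i, (A i (x - unitv d i) - A i x)) * v x
      = (if x = 0 then 1 else 0) * v x - 1 / T * G x * v x := by
    rw [← hx]; ring
  rw [h2]
  by_cases h0 : x = 0
  · subst h0; simpa using hpos
  · simpa [h0] using hpos

/-- Pointwise ellipticity for the weighted test function, up to the commutator. -/
theorem energy_pointwise {d : ℕ} (hd : 2 < d) {α R lam : ℝ} (hR : 0 < R) (hα : 0 ≤ α)
    (hα1 : α ≤ 1) {a : Lat d → Fin d → Fin d → ℝ} (ha : ∀ x, IsElliptic d lam (a x))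
    (G : Lat d → ℝ) (x : Lat d) :
    (lam - 36 * d * α) * (wt α R x ^ 2 * ∑ i, dgrad G x i ^ 2)
      - 36 * d * α * (wt α R x ^ 2 * (G x ^ 2 / rho x)) ≤
    ∑ i, mulVec' (a x) (dgrad G x) i * dgrad (fun y => wt α R y ^ 2 * G y) x i := by
  obtain ⟨r, hr, -, hρ, hx⟩ := exists_sqrt_rho hd x
  have w0 := wt_pos hd (α := α) hR x
  set D := ∑ i, dgrad G x i ^ 2 with hD
  set w := wt α R x
  have hAD := sum_sq_mulVec_le (ha x) (dgrad G x)
  have term : ∀ i, w ^ 2 * (dgrad G x i * mulVec' (a x) (dgrad G x) i)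
      - 36 * α * (w ^ 2 * (D + G x ^ 2 / r ^ 2)) ≤
      mulVec' (a x) (dgrad G x) i * dgrad (fun y => wt α R y ^ 2 * G y) x i := by
    intro i
    have hA : mulVec' (a x) (dgrad G x) i ^ 2 ≤ D :=
      (Finset.single_le_sum (f := fun i => mulVec' (a x) (dgrad G x) i ^ 2)
        (fun i _ => sq_nonneg _) (Finset.mem_univ i)).trans hAD
    have hg : dgrad G x i ^ 2 ≤ D :=
      Finset.single_le_sum (f := fun i => dgrad G x i ^ 2)
        (fun i _ => sq_nonneg _) (Finset.mem_univ i)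
    have hc := commutator_bound (G := G x) hα hα1 hr w0
      (wt_diff hd hR hα hα1 x i hr hρ (hx i)) hA hg
    have e : dgrad (fun y => wt α R y ^ 2 * G y) x i = w ^ 2 * dgrad G x i
        + (wt α R (x + unitv d i) ^ 2 - w ^ 2) * (G x + dgrad G x i) := by
      simp only [dgrad, w]; ring
    rw [e, mul_add]
    have := (abs_le.mp hc).1
    linarith
  have hs := Finset.sum_le_sum fun i (_ : i ∈ Finset.univ) => term i
  rw [Finset.sum_sub_distrib, Finset.sum_const, Finset.card_univ, Fintype.card_fin,
    nsmul_eq_mul, ← Finset.mul_sum, ← hρ] at hs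
  have hell := mul_le_mul_of_nonneg_left ((ha x).1 (dgrad G x)) (sq_nonneg w)
  rw [← hD] at hell
  refine le_trans ?_ hs
  linarith

/-- Uniform bound on the truncated weighted energy. -/
theorem weighted_energy {d : ℕ} (hd : 2 < d) {α R lam T : ℝ} (hR : 0 < R) (hT : 0 < T)
    (hlam : 0 < lam) (hα : 0 ≤ α) (hα1 : α ≤ 1)
    (hsmall : 72 * d * α ^ 2 * (16 * d + 4) ≤ 1 / 2)
    (hsmall' : 36 * d * α * (1 + 16 * (16 * d + 4)) ≤ lam / 2)
    {a : Lat d → Fin d → Fin d → ℝ} (ha : ∀ x, IsElliptic d lam (a x))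
    {G : Lat d → ℝ} (hG : IsGreen d T a 0 G) :
    Summable (fun x => wt α R x ^ 2 * ∑ i, dgrad G x i ^ 2) ∧
    ∑' x, wt α R x ^ 2 * ∑ i, dgrad G x i ^ 2 ≤
      (2 / lam * (26 * d) ^ 2) ^ 2 * (16 * (16 * d + 4)) * (26 * d) ^ 2 := by
  have hd' : (3 : ℝ) ≤ d := by exact_mod_cast hd
  have hDs : Summable fun x => ∑ i, dgrad G x i ^ 2 :=
    summable_sum fun i _ => summable_dgrad_sq hG.1 i
  have sE := summable_wt_sq hd (α := α) hR hDs
  have sH := summable_wt_sq hd (α := α) hR (summable_div_rho hd hG.1)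
  refine ⟨sE, ?_⟩
  obtain ⟨t1, t2⟩ := energy_test hd (α := α) hR hT ha hG
  have hWH := weighted_hardy hd hR hα hα1 hsmall hG.1
  have h1 := Summable.tsum_le_tsum (energy_pointwise hd hR hα hα1 ha G)
    ((sE.mul_left _).sub (sH.mul_left _)) t1
  rw [(sE.mul_left _).tsum_sub (sH.mul_left _), tsum_mul_left, tsum_mul_left] at h1
  have hρ0 : rho (0 : Lat d) = (26 * d) ^ 2 := by simp [rho]
  have hH0 : wt α R (0 : Lat d) ^ 2 * (G 0 ^ 2 / (26 * d) ^ 2)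
      ≤ ∑' x, wt α R x ^ 2 * (G x ^ 2 / rho x) := by
    rw [← hρ0]
    refine sH.le_tsum (0 : Lat d) fun x _ => ?_
    have := (sq_nonneg _).trans (rho_bound x)
    positivity
  set E := ∑' x, wt α R x ^ 2 * ∑ i, dgrad G x i ^ 2
  set H := ∑' x, wt α R x ^ 2 * (G x ^ 2 / rho x)
  set w := wt α R (0 : Lat d) with hw
  set K : ℝ := (26 * d) ^ 2 with hK
  set c : ℝ := 16 * (16 * d + 4) with hc
  have hE0 : 0 ≤ E := tsum_nonneg fun x =>
    mul_nonneg (sq_nonneg _) (Finset.sum_nonneg fun i _ => sq_nonneg _)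
  have hw0 : 0 < w := wt_pos hd hR _
  have hK1 : 1 ≤ K := by rw [hK]; nlinarith
  have hwK : w ≤ K := by
    refine (min_le_left _ _).trans ?_
    rw [hρ0]
    exact (Real.rpow_le_rpow_of_exponent_le hK1 hα1).trans (by rw [Real.rpow_one])
  have hc0 : 0 < c := by positivity
  have h2 : lam / 2 * E ≤ w ^ 2 * G 0 := by
    have := mul_le_mul_of_nonneg_left hWH (by positivity : (0 : ℝ) ≤ 36 * d * α)
    have := mul_le_mul_of_nonneg_right hsmall' hE0
    linarith
  have h3 : w ^ 2 * G 0 ^ 2 ≤ K * c * E := by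
    have : w ^ 2 * (G 0 ^ 2 / K) ≤ c * E := hH0.trans hWH
    rw [← mul_div_assoc, div_le_iff₀ (by linarith)] at this
    linarith
  -- squaring the energy bound and inserting the bound on `G 0` gives `E² ≤ const * E`
  have h4 : (lam / 2 * E) ^ 2 ≤ w ^ 2 * (K * c * E) := by
    calc (lam / 2 * E) ^ 2 ≤ (w ^ 2 * G 0) ^ 2 := pow_le_pow_left₀ (by positivity) h2 2
      _ = w ^ 2 * (w ^ 2 * G 0 ^ 2) := by ring
      _ ≤ _ := mul_le_mul_of_nonneg_left h3 (sq_nonneg _)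
  rcases hE0.eq_or_lt with h | h
  · rw [← h]; positivity
  · have h5 : (lam / 2) ^ 2 * E ≤ w ^ 2 * (K * c) := by
      refine le_of_mul_le_mul_right ?_ h
      linarith
    have h6 : w ^ 2 * (K * c) ≤ K ^ 2 * (K * c) :=
      mul_le_mul_of_nonneg_right (pow_le_pow_left₀ hw0.le hwK 2) (by positivity)
    calc E = (2 / lam) ^ 2 * ((lam / 2) ^ 2 * E) := by field_simp
      _ ≤ (2 / lam) ^ 2 * (K ^ 2 * (K * c)) :=
        mul_le_mul_of_nonneg_left (h5.trans h6) (by positivity)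
      _ = _ := by ring

theorem latnorm_add_one_le {d : ℕ} (hd : 2 < d) (x : Lat d) : latnorm x + 1 ≤ rho x := by
  have hd' : (3 : ℝ) ≤ d := by exact_mod_cast hd
  have h := sq_vnorm (fun i => (x i : ℝ))
  have e : latnorm x = vnorm (fun i => (x i : ℝ)) := rfl
  rw [← e] at h
  rw [rho, ← h]
  nlinarith [sq_nonneg (latnorm x - 1)]

/-- estimate (apriori_L2_alpha): weighted gradient bound on the
Green's function in dimensions `d > 2`. -/
theorem statement18 (d : ℕ) (hd : 2 < d) (lam : ℝ) (hlam0 : 0 < lam) (hlam1 : lam ≤ 1) :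
    ∃ α0 : ℝ, 0 < α0 ∧ α0 < (d : ℝ) ∧ ∃ C : ℝ, 0 < C ∧
      ∀ T : ℝ, 0 < T →
      ∀ a : Lat d → Fin d → Fin d → ℝ, (∀ x, IsElliptic d lam (a x)) →
      ∀ G : Lat d → ℝ, IsGreen d T a 0 G →
        Summable (fun x : Lat d => (latnorm x + 1) ^ (2 * α0) * vnorm (dgrad G x) ^ 2) ∧
        ∑' x : Lat d, (latnorm x + 1) ^ (2 * α0) * vnorm (dgrad G x) ^ 2 ≤ C := by
  have hd' : (3 : ℝ) ≤ d := by exact_mod_cast hd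
  set B : ℝ := 1 + 16 * (16 * d + 4) with hB
  have hB1 : 1 ≤ B := by rw [hB]; linarith
  set α : ℝ := lam / (72 * d * B) with hα
  have hden : 0 < 72 * (d : ℝ) * B := by positivity
  have hα0 : 0 < α := by positivity
  have hαe : 72 * d * B * α = lam := by rw [hα]; field_simp
  have hα1 : α ≤ 1 := by
    rw [hα, div_le_one hden]; nlinarith
  have hs1 : 72 * d * α ^ 2 * (16 * d + 4) ≤ 1 / 2 := by
    have e : 72 * d * α ^ 2 * (16 * d + 4) = (72 * d * B * α) * α * ((16 * d + 4) / B) := by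
      field_simp
    have h16 : (16 * (d : ℝ) + 4) / B ≤ 1 / 2 := by
      rw [div_le_iff₀ (by linarith), hB]; linarith
    have h0 : 0 ≤ (16 * (d : ℝ) + 4) / B := by positivity
    rw [e, hαe]
    have : lam * α ≤ 1 := by nlinarith
    nlinarith
  have hs2 : 36 * d * α * B ≤ lam / 2 := by linarith
  refine ⟨α, hα0, by linarith,
    (2 / lam * (26 * d) ^ 2) ^ 2 * (16 * (16 * d + 4)) * (26 * d) ^ 2, by positivity, ?_⟩
  intro T hT a ha G hG
  have hnn : ∀ x : Lat d, 0 ≤ (latnorm x + 1) ^ (2 * α) * vnorm (dgrad G x) ^ 2 := fun x =>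
    mul_nonneg (Real.rpow_nonneg (add_nonneg (Real.sqrt_nonneg _) zero_le_one) _) (sq_nonneg _)
  have key : ∀ s : Finset (Lat d), ∑ x ∈ s, (latnorm x + 1) ^ (2 * α) * vnorm (dgrad G x) ^ 2
      ≤ (2 / lam * (26 * d) ^ 2) ^ 2 * (16 * (16 * d + 4)) * (26 * d) ^ 2 := by
    intro s
    have hρ : ∀ x : Lat d, 0 < rho x := fun x =>
      lt_of_lt_of_le (by positivity) (rho_bound x)
    -- truncate above the largest value of the weight on `s`
    set R : ℝ := 1 + ∑ x ∈ s, rho x ^ α with hRdef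
    have hS : 0 ≤ ∑ x ∈ s, rho x ^ α :=
      Finset.sum_nonneg fun x _ => Real.rpow_nonneg (hρ x).le _
    have hR : 0 < R := by linarith
    obtain ⟨e1, e2⟩ := weighted_energy hd hR hT hlam0 hα0.le hα1 hs1 hs2 ha hG
    refine le_trans (Finset.sum_le_sum fun x hx => ?_) ((e1.sum_le_tsum s fun x _ => ?_).trans e2)
    · have hw : wt α R x = rho x ^ α := by
        refine min_eq_left ?_
        have := Finset.single_le_sum (f := fun x : Lat d => rho x ^ α)
          (fun x _ => Real.rpow_nonneg (hρ x).le _) hx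
        linarith
      rw [sq_vnorm, hw]
      refine mul_le_mul_of_nonneg_right ?_ (Finset.sum_nonneg fun i _ => sq_nonneg _)
      rw [← Real.rpow_natCast, ← Real.rpow_mul (hρ x).le, mul_comm α]
      exact Real.rpow_le_rpow (add_nonneg (Real.sqrt_nonneg _) zero_le_one)
        (latnorm_add_one_le hd x) (by positivity)
    · exact mul_nonneg (sq_nonneg _) (Finset.sum_nonneg fun i _ => sq_nonneg _)
  have hsm := summable_of_sum_le hnn key
  exact ⟨hsm, hsm.tsum_le_of_sum_le key⟩
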